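/- arXiv:1012.3775 — 3 statements merged into one kernel-verified Lean document; each statement's English description precedes it below -/
import Mathlib

section
/- Let n ≥ 1, fix an index a, and let ζ : ℝⁿ → ℝⁿ be a C² vector field. Define W_{ij}(x) = x_a (∂_i ζ_j(x) − ∂_j ζ_i(x)) + 2(ζ_i(x) δ_{aj} − ζ_j(x) δ_{ai}). Then W is antisymmetric (W_{ij} = −W_{ji}) and for every index j, 𝕌(V, L_ζδ)_j = ∑_i ∂_i W_{ij}, where V is the coordinate function V(x) = x_a. In other words, the center-of-mass integrand evaluated on a Lie derivative of the flat metric is the divergence of an explicit antisymmetric matrix field. -/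
/-!
Write `D i j = ∂_i ζ_j`. Expanding both sides with the sum and product rules and `∂_i x_a = δ_{ai}`,
the integrand becomes
`x_a (∑_i (∂_i ∂_i ζ_j + ∂_i ∂_j ζ_i) − 2 ∑_i ∂_j ∂_i ζ_i) − (D a j + D j a) + 2 δ_{aj} ∑_i D i i`,
and the divergence of `W` becomes
`x_a ∑_i (∂_i ∂_i ζ_j − ∂_i ∂_j ζ_i) + (D a j − D j a) + 2 (δ_{aj} ∑_i D i i − D a j)`.
The first-order terms agree identically, and the second-order terms agree because the partial
derivatives of a `C²` function commute (`pd_pd_comm`).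
-/

/-- The `i`-th partial derivative of a real-valued function on Euclidean space. -/
noncomputable def pd {n : ℕ} (i : Fin n) (f : EuclideanSpace ℝ (Fin n) → ℝ)
    (x : EuclideanSpace ℝ (Fin n)) : ℝ :=
  fderiv ℝ f x (EuclideanSpace.single i 1)

/-- The Lie derivative of the flat metric along `ζ`: `(L_ζ δ)_{ij} = ∂_i ζ_j + ∂_j ζ_i`. -/
noncomputable def lieFlat {n : ℕ} (ζ : EuclideanSpace ℝ (Fin n) → EuclideanSpace ℝ (Fin n))
    (x : EuclideanSpace ℝ (Fin n)) (i j : Fin n) : ℝ :=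
  pd i (fun y => ζ y j) x + pd j (fun y => ζ y i) x

/-- The charge integrand `𝕌(V,e)_j = V(∑_i ∂_i e_{ij} − ∂_j ∑_i e_{ii})
    − ∑_i (∂_i V) e_{ij} + (∑_i e_{ii}) ∂_j V`. -/
noncomputable def chargeU {n : ℕ} (V : EuclideanSpace ℝ (Fin n) → ℝ)
    (e : EuclideanSpace ℝ (Fin n) → Fin n → Fin n → ℝ) (j : Fin n)
    (x : EuclideanSpace ℝ (Fin n)) : ℝ :=
  V x * ((∑ i, pd i (fun y => e y i j) x) - pd j (fun y => ∑ i, e y i i) x)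
    - (∑ i, pd i V x * e x i j) + (∑ i, e x i i) * pd j V x

section PartialDerivatives

variable {n : ℕ} {f g : EuclideanSpace ℝ (Fin n) → ℝ} {x : EuclideanSpace ℝ (Fin n)}

lemma pd_add (i : Fin n) (hf : DifferentiableAt ℝ f x) (hg : DifferentiableAt ℝ g x) :
    pd i (fun y => f y + g y) x = pd i f x + pd i g x := by
  simp only [pd]
  rw [fderiv_fun_add hf hg]
  rfl

lemma pd_sub (i : Fin n) (hf : DifferentiableAt ℝ f x) (hg : DifferentiableAt ℝ g x) :
    pd i (fun y => f y - g y) x = pd i f x - pd i g x := by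
  simp only [pd]
  rw [fderiv_fun_sub hf hg]
  rfl

lemma pd_mul (i : Fin n) (hf : DifferentiableAt ℝ f x) (hg : DifferentiableAt ℝ g x) :
    pd i (fun y => f y * g y) x = f x * pd i g x + g x * pd i f x := by
  simp only [pd]
  rw [fderiv_fun_mul hf hg]
  rfl

lemma pd_const_mul (i : Fin n) (c : ℝ) (hf : DifferentiableAt ℝ f x) :
    pd i (fun y => c * f y) x = c * pd i f x := by
  simp only [pd]
  rw [fderiv_const_mul hf c]
  rfl

lemma pd_mul_const (i : Fin n) (c : ℝ) (hf : DifferentiableAt ℝ f x) :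
    pd i (fun y => f y * c) x = pd i f x * c := by
  simp only [mul_comm _ c]
  exact pd_const_mul i c hf

lemma pd_sum (i : Fin n) {F : Fin n → EuclideanSpace ℝ (Fin n) → ℝ}
    (hF : ∀ k, DifferentiableAt ℝ (F k) x) :
    pd i (fun y => ∑ k, F k y) x = ∑ k, pd i (F k) x := by
  simp only [pd]
  rw [fderiv_fun_sum fun k _ => hF k]
  simp

lemma pd_coord (i a : Fin n) :
    pd i (fun y : EuclideanSpace ℝ (Fin n) => y a) x = if a = i then 1 else 0 := by
  have h : fderiv ℝ (fun y : EuclideanSpace ℝ (Fin n) => y a) x = EuclideanSpace.proj a :=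
    (EuclideanSpace.proj a : EuclideanSpace ℝ (Fin n) →L[ℝ] ℝ).fderiv
  simp only [pd]
  rw [h]
  simp

lemma differentiable_pd (i : Fin n) (hf : ContDiff ℝ 2 f) : Differentiable ℝ (pd i f) := by
  have h : Differentiable ℝ (fderiv ℝ f) :=
    (hf.fderiv_right (m := 1) (by norm_num)).differentiable (by norm_num)
  exact h.clm_apply (differentiable_const _)

lemma pd_pd (i j : Fin n) (hf : ContDiff ℝ 2 f) :
    pd i (pd j f) x
      = fderiv ℝ (fderiv ℝ f) x (EuclideanSpace.single i 1) (EuclideanSpace.single j 1) := by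
  have h : Differentiable ℝ (fderiv ℝ f) :=
    (hf.fderiv_right (m := 1) (by norm_num)).differentiable (by norm_num)
  change fderiv ℝ (fun y => fderiv ℝ f y (EuclideanSpace.single j 1)) x _ = _
  rw [fderiv_clm_apply (h x) (differentiableAt_const _)]
  simp

lemma pd_pd_comm (i j : Fin n) (hf : ContDiff ℝ 2 f) : pd i (pd j f) x = pd j (pd i f) x := by
  rw [pd_pd i j hf, pd_pd j i hf]
  exact (hf.contDiffAt.isSymmSndFDerivAt (by simp)).eq _ _

end PartialDerivatives

/-- for `n ≥ 1`, a fixed index `a`, and a `C²` vector field `ζ`, the matrix field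
`W_{ij}(x) = x_a (∂_i ζ_j(x) − ∂_j ζ_i(x)) + 2(ζ_i(x) δ_{aj} − ζ_j(x) δ_{ai})` is antisymmetric
and the center-of-mass integrand `𝕌(x ↦ x_a, L_ζδ)_j` equals its divergence `∑_i ∂_i W_{ij}`. -/
theorem center_of_mass_integrand_of_lie_is_divergence_of_antisymmetric
    (n : ℕ) (hn : 1 ≤ n) (a : Fin n)
    (ζ : EuclideanSpace ℝ (Fin n) → EuclideanSpace ℝ (Fin n))
    (hζ : ContDiff ℝ 2 ζ)
    (W : EuclideanSpace ℝ (Fin n) → Fin n → Fin n → ℝ)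
    (hW : ∀ x i j, W x i j =
      x a * (pd i (fun z => ζ z j) x - pd j (fun z => ζ z i) x)
        + 2 * (ζ x i * (if a = j then (1:ℝ) else 0) - ζ x j * (if a = i then (1:ℝ) else 0))) :
    (∀ x i j, W x i j = - W x j i) ∧
    (∀ j x, chargeU (fun y => y a) (fun y => lieFlat ζ y) j x
      = ∑ i, pd i (fun y => W y i j) x) := by
  refine ⟨fun x i j => by rw [hW, hW]; ring, fun j x => ?_⟩
  have hc : ∀ k, ContDiff ℝ 2 (fun z => ζ z k) := fun k =>
    (EuclideanSpace.proj k : EuclideanSpace ℝ (Fin n) →L[ℝ] ℝ).contDiff.comp hζ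
  have hd : ∀ k, DifferentiableAt ℝ (fun z => ζ z k) x := fun k =>
    (hc k).differentiable (by norm_num) x
  have hp : ∀ i k, DifferentiableAt ℝ (pd i fun z => ζ z k) x := fun i k =>
    differentiable_pd i (hc k) x
  have ha : DifferentiableAt ℝ (fun y : EuclideanSpace ℝ (Fin n) => y a) x :=
    (EuclideanSpace.proj a : EuclideanSpace ℝ (Fin n) →L[ℝ] ℝ).differentiableAt
  have hdiv : ∀ i, pd i (fun y => W y i j) x =
      x a * (pd i (pd i fun z => ζ z j) x - pd i (pd j fun z => ζ z i) x)
        + (pd i (fun z => ζ z j) x - pd j (fun z => ζ z i) x) * (if a = i then (1:ℝ) else 0)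
        + 2 * (pd i (fun z => ζ z i) x * (if a = j then (1:ℝ) else 0)
          - pd i (fun z => ζ z j) x * (if a = i then (1:ℝ) else 0)) := by
    intro i
    simp only [hW]
    have h1 : DifferentiableAt ℝ
        (fun y => pd i (fun z => ζ z j) y - pd j (fun z => ζ z i) y) x := (hp i j).fun_sub (hp j i)
    have h2 : ∀ k (c : ℝ), DifferentiableAt ℝ (fun y => ζ y k * c) x := fun k c =>
      (hd k).mul_const c
    rw [pd_add i (ha.fun_mul h1) (((h2 i _).fun_sub (h2 j _)).const_mul 2), pd_mul i ha h1,
      pd_sub i (hp i j) (hp j i), pd_coord, pd_const_mul i 2 ((h2 i _).fun_sub (h2 j _)),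
      pd_sub i (h2 i _) (h2 j _), pd_mul_const i _ (hd i), pd_mul_const i _ (hd j)]
  have hlie : ∀ i k l, pd i (fun y => lieFlat ζ y k l) x
      = pd i (pd k fun z => ζ z l) x + pd i (pd l fun z => ζ z k) x := fun i k l =>
    pd_add i (hp k l) (hp l k)
  have htr : pd j (fun y => ∑ i, lieFlat ζ y i i) x
      = ∑ i, (pd i (pd j fun z => ζ z i) x + pd i (pd j fun z => ζ z i) x) := by
    rw [pd_sum (F := fun i y => lieFlat ζ y i i) j fun i => (hp i i).add (hp i i)]
    refine Finset.sum_congr rfl fun i _ => ?_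
    rw [hlie, pd_pd_comm j i (hc i)]
  simp only [chargeU, hdiv, hlie, htr, pd_coord]
  simp only [lieFlat, Finset.sum_add_distrib, Finset.sum_sub_distrib, ← Finset.mul_sum,
    mul_ite, ite_mul, mul_one, mul_zero, one_mul, zero_mul,
    Finset.sum_ite_eq, Finset.mem_univ, if_true]
  split_ifs <;> simp <;> ring
end

section
/- Let n ≥ 2, r₀ > 0, and let U : ℝⁿ → ℝⁿ be a C¹ vector field on the region {x : |x| ≥ r₀} whose divergence x ↦ ∑_j ∂_j U_j(x) is Lebesgue-integrable on {x : |x| ≥ r₀}. Then the flux integrals ∫_{S_r} ⟨U(x), x/r⟩ dσ_r(x) converge to a finite limit as r → ∞. -/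
/-!
The statement is the divergence theorem on annuli followed by a Cauchy argument. The classical
divergence theorem for the region between two spheres is not available, and the flux is written with
the Hausdorff measure `μH[n - 1]`, so the proof goes through two substitutes. Write `n = m + 1`.

* The measure `μH[m]` on the unit sphere is finite (`hausdorffMeasure_sphere_lt_top`) and invariant
  under rotations, and so is the measure `toSphere` of polar coordinates. Two such measures are
  proportional (`smul_eq_smul_of_invariant`): their characteristic functions are radial, and Fubini
  shows that they are multiples of each other. By scaling, the flux through the sphere of radius `r`
  is `c * G r`, where `G r = r ^ m * ∫ ⟨U (r ω), ω⟩` (`fluxAux`) is computed with `toSphere` and `c`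
  depends only on `m`.

* For a radial cutoff `φ (‖x‖)` supported in an annulus, integration by parts and polar coordinates
  give `∫ φ' (r) G (r) dr = - ∫ φ (‖x‖) div U` (see `abs_integral_mul_fluxAux_le`). Taking for `φ` the
  difference of two smooth steps at `a` and `b`, and letting the width of the steps shrink, the
  continuity of `G` gives `|G a - G b| ≤ ∫_{‖x‖ ≥ R} |div U|` for all `a, b > R > r₀`
  (`abs_fluxAux_sub_le`).

Since `div U` is integrable, the right-hand side tends to `0` as `R → ∞`; so `G` is Cauchy at
infinity and converges.
-/

open MeasureTheory Filter

/-! ### Rotation-invariant measures on the unit sphere -/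

/-- Euclidean space of dimension `m + 1`. Writing the dimension as a successor makes the dimension `m`
of the spheres a natural number and excludes the zero-dimensional space. -/
abbrev Euc (m : ℕ) : Type := EuclideanSpace ℝ (Fin (m + 1))

/-- The characteristic function of a rotation-invariant measure is radial: two vectors of equal norm
are exchanged by a reflection. -/
lemma charFun_eq_of_norm_eq {E : Type*} [NormedAddCommGroup E] [InnerProductSpace ℝ E]
    [MeasurableSpace E] [BorelSpace E] {μ : Measure E}
    (hμ : ∀ g : E ≃ₗᵢ[ℝ] E, μ.map g = μ) {s t : E} (hst : ‖s‖ = ‖t‖) :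
    charFun μ s = charFun μ t := by
  set g : E ≃ₗᵢ[ℝ] E := (Submodule.span ℝ {s - t})ᗮ.reflection with hg
  have hgs : g s = t := Submodule.reflection_sub hst
  conv_rhs => rw [← hμ g, ← hgs]
  rw [charFun_apply, charFun_apply]
  refine Eq.trans ?_ (g.toHomeomorph.measurableEmbedding.integral_map _).symm
  simp [LinearIsometryEquiv.inner_map_map]

/-- Two finite rotation-invariant measures on the unit sphere are proportional. Since the characteristic
functions are radial, Fubini applied to `exp (i ‖t‖ ⟪x, y⟫)` against `μ ⊗ ν` gives
`ν(E) · charFun μ t = μ(E) · charFun ν t`, and characteristic functions determine finite measures. -/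
lemma smul_eq_smul_of_invariant {E : Type*} [NormedAddCommGroup E] [InnerProductSpace ℝ E]
    [CompleteSpace E] [SecondCountableTopology E]
    [MeasurableSpace E] [BorelSpace E] (μ ν : Measure E) [IsFiniteMeasure μ] [IsFiniteMeasure ν]
    (hμ : ∀ g : E ≃ₗᵢ[ℝ] E, μ.map g = μ) (hν : ∀ g : E ≃ₗᵢ[ℝ] E, ν.map g = ν)
    (hμS : ∀ᵐ x ∂μ, ‖x‖ = 1) (hνS : ∀ᵐ x ∂ν, ‖x‖ = 1) :
    ν Set.univ • μ = μ Set.univ • ν := by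
  -- for `ν`-almost every `y`, `‖t‖ • y` has the norm of `t`, so `charFun μ` agrees at both points
  have key : ∀ (μ ν : Measure E) [IsFiniteMeasure ν],
      (∀ g : E ≃ₗᵢ[ℝ] E, μ.map g = μ) → (∀ᵐ x ∂ν, ‖x‖ = 1) → ∀ t : E,
      ∫ y, charFun μ (‖t‖ • y) ∂ν = ν.real Set.univ • charFun μ t := by
    intro μ ν _ hμ hνS t
    rw [← integral_const]
    refine integral_congr_ae ?_
    filter_upwards [hνS] with y hy
    exact charFun_eq_of_norm_eq hμ (by simp [norm_smul, hy])
  have hfin : IsFiniteMeasure (ν Set.univ • μ) := μ.smul_finite (measure_ne_top _ _)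
  have hfin' : IsFiniteMeasure (μ Set.univ • ν) := ν.smul_finite (measure_ne_top _ _)
  refine Measure.ext_of_charFun ?_
  ext t
  rw [charFun_apply, charFun_apply, integral_smul_measure, integral_smul_measure,
    ← charFun_apply, ← charFun_apply]
  change ν.real Set.univ • _ = μ.real Set.univ • _
  rw [← key μ ν hμ hνS t, ← key ν μ hν hμS t]
  simp only [charFun_apply]
  rw [integral_integral_swap]
  · simp only [inner_smul_right, real_inner_comm]
  · refine Integrable.mono' (g := fun _ => (1 : ℝ)) (integrable_const _) ?_ ?_
    · apply Continuous.aestronglyMeasurable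
      unfold Function.uncurry
      fun_prop
    · filter_upwards with x
      simp [Function.uncurry, Complex.norm_exp]

/-! ### The Hausdorff measure of the sphere -/

/-- The unit sphere of `ℝ^(m+1)` has finite `m`-dimensional Hausdorff measure: it is the union of the
radial projections of the `2 (m + 1)` faces of the cube `[-1, 1]^(m+1)`, and each of these is the
image of the compact cube `[-1, 1]^m` under a `C¹`, hence Lipschitz, map. -/
lemma hausdorffMeasure_sphere_lt_top (m : ℕ) :
    μH[(m : ℝ)] (Metric.sphere (0 : Euc m) 1) < ⊤ := by
  -- `q i s` parametrizes the hyperplane `x i = s`; `P i s` is `q i s` followed by radial projection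
  let q : Fin (m + 1) → ℝ → (Fin m → ℝ) → Euc m :=
    fun i s y => WithLp.toLp 2 (i.insertNth s y : Fin (m + 1) → ℝ)
  let P : Fin (m + 1) → ℝ → (Fin m → ℝ) → Euc m :=
    fun i s y => ‖q i s y‖⁻¹ • q i s y
  have hq0 : ∀ i s y, s ≠ 0 → q i s y ≠ 0 := by
    intro i s y hs h
    have := congrArg (fun v : Euc m => v i) h
    simp [q] at this
    exact hs this
  have hq : ∀ i s, ContDiff ℝ 1 (q i s) := by
    intro i s
    rw [contDiff_euclidean]
    intro k
    refine Fin.succAboveCases i ?_ (fun k => ?_) k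
    · simpa [q] using contDiff_const
    · simpa [q] using contDiff_apply ℝ ℝ k
  have hP : ∀ i s, s ≠ 0 → ContDiff ℝ 1 (P i s) := by
    intro i s hs
    exact (((hq i s).norm ℝ (fun y => hq0 i s y hs)).inv
      (fun y => norm_ne_zero_iff.2 (hq0 i s y hs))).smul (hq i s)
  have hfin : ∀ i s, s ≠ 0 → μH[(m : ℝ)] (P i s '' Set.Icc (-1) 1) < ⊤ := by
    intro i s hs
    obtain ⟨K, hK⟩ := (hP i s hs).contDiffOn (s := Set.Icc (-1) 1)|>.exists_lipschitzOnWith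
      one_ne_zero (convex_Icc _ _) isCompact_Icc
    refine (hK.hausdorffMeasure_image_le (Nat.cast_nonneg m)).trans_lt ?_
    have : (μH[(m : ℝ)] : Measure (Fin m → ℝ)) = volume := by
      simpa using hausdorffMeasure_pi_real (ι := Fin m)
    rw [this]
    exact ENNReal.mul_lt_top (ENNReal.rpow_lt_top_of_nonneg (Nat.cast_nonneg m) (by simp))
      isCompact_Icc.measure_lt_top
  have hcov : Metric.sphere (0 : Euc m) 1 ⊆
      ⋃ i : Fin (m + 1), (P i 1 '' Set.Icc (-1) 1 ∪ P i (-1) '' Set.Icc (-1) 1) := by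
    intro x hx
    have hx1 : ‖x‖ = 1 := by simpa using hx
    -- `x` comes from a face on which its largest coordinate equals `± 1`
    obtain ⟨i, -, hi⟩ := Finset.exists_max_image Finset.univ (fun i => |x i|)
      Finset.univ_nonempty
    have hi0 : 0 < |x i| := by
      by_contra h
      have : x = 0 := by
        ext k
        have := hi k (Finset.mem_univ k)
        exact abs_eq_zero.1 (le_antisymm (this.trans (not_lt.1 h)) (abs_nonneg _))
      simp [this] at hx1
    have hmain : ∀ s : ℝ, s * |x i| = x i →
        x ∈ P i s '' Set.Icc (-1) 1 := by
      intro s hs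
      have hqe : q i s (fun k => x (i.succAbove k) / |x i|) = |x i|⁻¹ • x := by
        ext k
        refine Fin.succAboveCases i ?_ (fun k => ?_) k
        · simp [q]; field_simp; linarith
        · simp [q]; field_simp
      refine ⟨fun k => x (i.succAbove k) / |x i|, ?_, ?_⟩
      · rw [Set.mem_Icc, Pi.le_def, Pi.le_def, ← forall_and]
        intro k
        refine abs_le.1 (?_ : |_| ≤ (1 : ℝ))
        simpa [abs_div] using div_le_one_of_le₀ (hi (i.succAbove k) (Finset.mem_univ _)) hi0.le
      · simp only [P, hqe, norm_smul, hx1, smul_smul]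
        simp [hi0.ne']
    refine Set.mem_iUnion.2 ⟨i, ?_⟩
    rcases le_total 0 (x i) with h | h
    · exact Or.inl (hmain 1 (by rw [abs_of_nonneg h]; ring))
    · exact Or.inr (hmain (-1) (by rw [abs_of_nonpos h]; ring))
  refine (measure_mono hcov).trans_lt ((measure_iUnion_fintype_le _ _).trans_lt ?_)
  refine ENNReal.sum_lt_top.2 fun i _ => (measure_union_le _ _).trans_lt ?_
  exact ENNReal.add_lt_top.2 ⟨hfin i 1 one_ne_zero, hfin i (-1) (by norm_num)⟩

open scoped Pointwise in
/-- On the unit sphere, integration against the Hausdorff measure is a constant multiple of integration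
against Mathlib's polar-coordinate measure `toSphere`. The value of the constant, which depends only
on `m`, plays no role for the existence of the limit. -/
lemma integral_hausdorff_sphere (m : ℕ) :
    ∃ c : ℝ, ∀ f : Euc m → ℝ,
      ∫ x in Metric.sphere (0 : Euc m) 1, f x ∂(μH[(m : ℝ)]) =
        c * ∫ ω, f ω ∂((volume : Measure (Euc m)).toSphere) := by
  set S := Metric.sphere (0 : Euc m) 1 with hS
  have hSm : MeasurableSet S := Metric.isClosed_sphere.measurableSet
  set τ := (volume : Measure (Euc m)).toSphere with hτ
  set σ' : Measure (Euc m) := (μH[(m : ℝ)] : Measure (Euc m)).restrict S with hσ'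
  set τ' : Measure (Euc m) := τ.map Subtype.val with hτ'
  have hval : MeasurableEmbedding (Subtype.val : S → Euc m) := MeasurableEmbedding.subtype_coe hSm
  have hgS : ∀ g : Euc m ≃ₗᵢ[ℝ] Euc m, g ⁻¹' S = S := by
    intro g; ext x; simp [hS]
  have : IsFiniteMeasure σ' := isFiniteMeasure_restrict.2 (hausdorffMeasure_sphere_lt_top m).ne
  have h1 : ∀ g : Euc m ≃ₗᵢ[ℝ] Euc m, σ'.map g = σ' := by
    intro g
    ext s hs
    rw [Measure.map_apply g.continuous.measurable hs, hσ',
      Measure.restrict_apply (g.continuous.measurable hs), Measure.restrict_apply hs]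
    conv_lhs => rw [← hgS g, ← Set.preimage_inter]
    exact g.toIsometryEquiv.hausdorffMeasure_preimage _ _
  -- `τ A` is a multiple of the volume of the cone over `A`, and linear isometries preserve volume
  have h2 : ∀ g : Euc m ≃ₗᵢ[ℝ] Euc m, τ'.map g = τ' := by
    intro g
    ext s hs
    rw [Measure.map_apply g.continuous.measurable hs, hτ', hval.map_apply, hval.map_apply, hτ,
      Measure.toSphere_apply' _ (measurable_subtype_coe (g.continuous.measurable hs)),
      Measure.toSphere_apply' _ (measurable_subtype_coe hs), Subtype.image_preimage_coe,
      Subtype.image_preimage_coe]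
    congr 1
    rw [← g.measurePreserving.measure_preimage_emb g.toHomeomorph.measurableEmbedding
      (Set.Ioo (0 : ℝ) 1 • (Metric.sphere (0 : Euc m) 1 ∩ s))]
    congr 1
    ext x
    simp only [Set.mem_smul, Set.mem_preimage]
    constructor
    · rintro ⟨t, ht, y, ⟨hy1, hy2⟩, rfl⟩
      refine ⟨t, ht, g y, ⟨?_, hy2⟩, by simp⟩
      simpa [hS] using hy1
    · rintro ⟨t, ht, y, ⟨hy1, hy2⟩, h⟩
      refine ⟨t, ht, g.symm y, ⟨?_, by simpa using hy2⟩, ?_⟩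
      · rw [mem_sphere_zero_iff_norm, g.symm.norm_map]
        simpa using hy1
      · apply g.injective; simpa using h
  have h3 : ∀ᵐ x ∂σ', ‖x‖ = 1 := by
    filter_upwards [ae_restrict_mem hSm] with x hx
    simpa [hS] using hx
  have h4 : ∀ᵐ x ∂τ', ‖x‖ = 1 := by
    rw [hτ', hval.ae_map_iff]
    filter_upwards with x
    simp
  have key := smul_eq_smul_of_invariant σ' τ' h1 h2 h3 h4
  have hτ0 : τ'.real Set.univ ≠ 0 := by
    have : τ ≠ 0 := Measure.toSphere_ne_zero _
    rw [Measure.real, ENNReal.toReal_ne_zero]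
    refine ⟨?_, measure_ne_top _ _⟩
    rw [hτ', hval.map_apply]
    simp [this]
  refine ⟨σ'.real Set.univ / τ'.real Set.univ, fun f => ?_⟩
  have := congrArg (fun μ : Measure (Euc m) => ∫ x, f x ∂μ) key
  simp only [integral_smul_measure] at this
  rw [hτ', hval.integral_map, ← hτ'] at this
  change τ'.real Set.univ * _ = σ'.real Set.univ * _ at this
  field_simp
  linarith

open scoped Pointwise in
lemma integral_hausdorff_sphere_radius (m : ℕ) {r : ℝ} (hr : 0 < r)
    (f : Euc m → ℝ) :
    ∫ x in Metric.sphere (0 : Euc m) r, f x ∂(μH[(m : ℝ)]) =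
      r ^ m * ∫ x in Metric.sphere (0 : Euc m) 1, f (r • x)
        ∂(μH[(m : ℝ)]) := by
  have hemb := (Homeomorph.smulOfNeZero (α := Euc m) r hr.ne').measurableEmbedding
  have : (μH[(m : ℝ)] : Measure (Euc m)).restrict (Metric.sphere 0 r) =
      ENNReal.ofReal (r ^ m) • ((μH[(m : ℝ)] : Measure (Euc m)).restrict (Metric.sphere 0 1)).map
        (Homeomorph.smulOfNeZero (α := Euc m) r hr.ne') := by
    ext s hs
    rw [Measure.restrict_apply hs, Measure.smul_apply, hemb.map_apply,
      Measure.restrict_apply (hemb.measurable hs)]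
    have hset : s ∩ Metric.sphere 0 r =
        r • ((Homeomorph.smulOfNeZero (α := Euc m) r hr.ne') ⁻¹' s ∩ Metric.sphere 0 1) := by
      ext x
      rw [Set.mem_smul_set_iff_inv_smul_mem₀ hr.ne']
      simp only [Set.mem_inter_iff, mem_sphere_zero_iff_norm, Set.mem_preimage,
        Homeomorph.smulOfNeZero_apply, smul_inv_smul₀ hr.ne', norm_smul, norm_inv,
        Real.norm_eq_abs, abs_of_pos hr, inv_mul_eq_one₀ hr.ne', eq_comm (a := r)]
    rw [hset, Measure.hausdorffMeasure_smul₀ (Nat.cast_nonneg m) hr.ne', NNReal.rpow_natCast,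
      ENNReal.smul_def, smul_eq_mul, smul_eq_mul]
    congr 1
    rw [ENNReal.ofReal, ENNReal.coe_inj]
    ext
    simp [abs_of_pos hr, hr.le]
  rw [this, integral_smul_measure, hemb.integral_map, ENNReal.toReal_ofReal (by positivity)]
  rfl

/-! ### Polar coordinates and the rescaled flux -/

/-- Integration in polar coordinates on `ℝ^(m+1)`, as an iterated integral. -/
lemma integral_polar (m : ℕ) {h : Euc m → ℝ} (hh : Integrable h) :
    ∫ x, h x = ∫ r in Set.Ioi (0 : ℝ), r ^ m *
      ∫ ω, h (r • (ω : Euc m))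
        ∂((volume : Measure (Euc m)).toSphere) := by
  have hmp := (volume : Measure (Euc m)).measurePreserving_homeomorphUnitSphereProd
  have hdim : Module.finrank ℝ (Euc m) - 1 = m := by simp
  rw [hdim] at hmp
  have hemb := (homeomorphUnitSphereProd (Euc m)).measurableEmbedding
  set H : Metric.sphere (0 : Euc m) 1 × Set.Ioi (0 : ℝ) → ℝ := fun p => h (p.2.1 • (p.1 : Euc m)) with hH
  have hHc : ∀ x : ({0}ᶜ : Set (Euc m)), H (homeomorphUnitSphereProd (Euc m) x) = h x := by
    intro x
    have hx : ‖(x : Euc m)‖ ≠ 0 := norm_ne_zero_iff.2 x.2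
    simp [hH, smul_smul, hx]
  have hcm : MeasurableSet ({0}ᶜ : Set (Euc m)) := (measurableSet_singleton _).compl
  have e1 : ∫ x, h x = ∫ p, H p ∂((volume : Measure (Euc m)).toSphere.prod (Measure.volumeIoiPow m)) := by
    rw [← hmp.integral_comp hemb]
    simp only [hHc]
    rw [integral_subtype_comap hcm, restrict_compl_singleton]
  have hHi : Integrable H ((volume : Measure (Euc m)).toSphere.prod (Measure.volumeIoiPow m)) := by
    rw [← hmp.integrable_comp_emb hemb]
    have : (H ∘ homeomorphUnitSphereProd (Euc m)) = h ∘ Subtype.val := funext hHc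
    rw [this, ← integrableOn_iff_comap_subtypeVal hcm]
    exact hh.integrableOn
  rw [e1, integral_prod_symm _ hHi, Measure.volumeIoiPow,
    integral_withDensity_eq_integral_toReal_smul]
  · refine (integral_subtype_comap measurableSet_Ioi (fun r : ℝ => (ENNReal.ofReal (r ^ m)).toReal •
      ∫ ω : Metric.sphere (0 : Euc m) 1, h (r • (ω : Euc m))
        ∂(volume : Measure (Euc m)).toSphere)).trans ?_
    refine setIntegral_congr_fun measurableSet_Ioi fun r hr => ?_
    have : 0 < r := hr
    simp only [smul_eq_mul]
    rw [ENNReal.toReal_ofReal (by positivity)]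
  · fun_prop
  · simp

/-- The flux of `U` through the sphere of radius `r`, computed with the measure `toSphere` on the unit
sphere instead of the Hausdorff measure. Evaluating `U` at radius `max r r₀` makes this a continuous
function on all of `ℝ`; for `r₀ ≤ r` the maximum is `r`. -/
noncomputable def fluxAux (m : ℕ) (r₀ : ℝ) (U : Euc m → Euc m) (r : ℝ) : ℝ :=
  r ^ m * ∫ ω : Metric.sphere (0 : Euc m) 1,
    ∑ j, U (max r r₀ • (ω : Euc m)) j * (ω : Euc m) j ∂(volume : Measure (Euc m)).toSphere

lemma continuous_fluxAux {m : ℕ} {r₀ : ℝ} (hr₀ : 0 < r₀) {U : Euc m → Euc m}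
    (hU : ContDiffOn ℝ 1 U {x | r₀ ≤ ‖x‖}) : Continuous (fluxAux m r₀ U) := by
  have hc : Continuous fun p : ℝ × Metric.sphere (0 : Euc m) 1 =>
      U (max p.1 r₀ • (p.2 : Euc m)) := by
    refine hU.continuousOn.comp_continuous (by fun_prop) fun p => ?_
    have h1 : ‖(p.2 : Euc m)‖ = 1 := by simp
    have h2 : 0 ≤ max p.1 r₀ := hr₀.le.trans (le_max_right _ _)
    simp [norm_smul, h1, abs_of_nonneg h2]
  refine (continuous_pow m).mul ?_
  have := continuous_parametric_integral_of_continuous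
    (μ := (volume : Measure (Euc m)).toSphere)
    (f := fun (r : ℝ) (ω : Metric.sphere (0 : Euc m) 1) =>
      ∑ j, U (max r r₀ • (ω : Euc m)) j * (ω : Euc m) j) (by
      unfold Function.uncurry
      refine continuous_finsetSum _ fun j _ => ?_
      have : Continuous fun p : ℝ × Metric.sphere (0 : Euc m) 1 =>
          (U (max p.1 r₀ • (p.2 : Euc m))) j := (PiLp.continuous_apply 2 _ j).comp hc
      exact this.mul (by fun_prop)) isCompact_univ
  simpa using this

lemma isCompact_annulus (m : ℕ) (a b : ℝ) :
    IsCompact {x : Euc m | ‖x‖ ∈ Set.Icc a b} := by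
  refine (isCompact_closedBall (0 : Euc m) b).of_isClosed_subset
    (isClosed_Icc.preimage continuous_norm) fun x hx => ?_
  simpa using hx.2

/-- A function that is continuous outside a closed ball and vanishes off a compact annulus contained in
that region is integrable, whatever its values inside the ball. -/
lemma integrable_of_annulus {m : ℕ} {r₀ a b : ℝ} (ha : r₀ < a) {h : Euc m → ℝ}
    (hc : ContinuousOn h {x | r₀ < ‖x‖}) (h0 : ∀ x, ‖x‖ ∉ Set.Icc a b → h x = 0) :
    Integrable h := by
  have hK := isCompact_annulus m a b
  refine (integrableOn_iff_integrable_of_support_subset (s := {x | ‖x‖ ∈ Set.Icc a b}) ?_).1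
    ((hc.mono fun x hx => ha.trans_le hx.1).integrableOn_compact hK)
  intro x hx
  by_contra h
  exact hx (h0 x h)

/-! ### Integration by parts against a radial cutoff -/

lemma hasFDerivAt_radial {m : ℕ} {φ ψ : ℝ → ℝ} (hφ : ∀ s, HasDerivAt φ (ψ s) s) {x : Euc m}
    (hx : x ≠ 0) : HasFDerivAt (fun y : Euc m => φ ‖y‖) ((ψ ‖x‖ / ‖x‖) • innerSL ℝ x) x := by
  have hx' : ‖x‖ ≠ 0 := norm_ne_zero_iff.2 hx
  have h1 : HasFDerivAt (fun y : Euc m => ‖y‖) (‖x‖⁻¹ • innerSL ℝ x) x := by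
    have := ((hasFDerivAt_id x).norm_sq).sqrt (by simpa using hx)
    simp only [id, Real.sqrt_sq (norm_nonneg _)] at this
    refine this.congr_fderiv ?_
    ext v
    simp
    field_simp
  refine ((hφ ‖x‖).comp_hasFDerivAt x h1).congr_fderiv ?_
  rw [smul_smul, div_eq_mul_inv]

/-- The divergence theorem in weak form. For a `C¹` cutoff `φ` supported in `[a, b]`, with derivative `ψ`
and `|φ| ≤ 1`, integration by parts and polar coordinates give
`∫ ψ(r) · fluxAux r dr = -∫ φ(‖x‖) · div U`, whence the bound. -/
lemma abs_integral_mul_fluxAux_le {m : ℕ} {r₀ a b : ℝ} (hr₀ : 0 < r₀) (ha : r₀ < a)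
    {U : Euc m → Euc m} (hU : ContDiffOn ℝ 1 U {x | r₀ ≤ ‖x‖})
    (hdiv : IntegrableOn (fun x => ∑ j, pd j (fun y => U y j) x) {x | r₀ ≤ ‖x‖} volume)
    {φ ψ : ℝ → ℝ} (hφ : ∀ s, HasDerivAt φ (ψ s) s) (hψ : Continuous ψ)
    (hφ0 : ∀ s ∉ Set.Icc a b, φ s = 0) (hψ0 : ∀ s ∉ Set.Icc a b, ψ s = 0)
    (hφ1 : ∀ s, |φ s| ≤ 1) :
    |∫ r in Set.Ioi (0 : ℝ), ψ r * fluxAux m r₀ U r| ≤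
      ∫ x in {x : Euc m | a ≤ ‖x‖}, |∑ j, pd j (fun y => U y j) x| := by
  have hφc : Continuous φ := continuous_iff_continuousAt.2 fun s => (hφ s).continuousAt
  have hopen : IsOpen {x : Euc m | r₀ < ‖x‖} := isOpen_lt continuous_const continuous_norm
  have hUj : ∀ j, ContDiffOn ℝ 1 (fun y => U y j) {x | r₀ < ‖x‖} := fun j =>
    (contDiffOn_euclidean.1 hU j).mono fun x (hx : r₀ < ‖x‖) => hx.le
  -- the cutoff is flat near the origin, so it is differentiable there too
  have hfd : ∀ x, HasFDerivAt (fun y : Euc m => φ ‖y‖) ((ψ ‖x‖ / ‖x‖) • innerSL ℝ x) x := by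
    intro x
    rcases eq_or_ne x 0 with rfl | hx
    · have h0 : (fun y : Euc m => φ ‖y‖) =ᶠ[nhds 0] fun _ => 0 := by
        filter_upwards [Metric.ball_mem_nhds (0 : Euc m) (hr₀.trans ha)] with y hy
        exact hφ0 _ fun h => by
          have : ‖y‖ < a := by simpa using hy
          linarith [h.1]
      simpa using (hasFDerivAt_const (0 : ℝ) (0 : Euc m)).congr_of_eventuallyEq h0
    · exact hasFDerivAt_radial hφ hx
  have hfd' : ∀ x (j : Fin (m + 1)), fderiv ℝ (fun y : Euc m => φ ‖y‖) x
      (EuclideanSpace.single j 1) = ψ ‖x‖ / ‖x‖ * x j := by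
    intro x j
    rw [(hfd x).fderiv]
    simp [EuclideanSpace.inner_single_right]
  have hpos : ∀ x ∈ {x : Euc m | r₀ < ‖x‖}, ‖x‖ ≠ 0 := fun x hx => (hr₀.trans hx).ne'
  have hi1 : ∀ j, Integrable fun x : Euc m => ψ ‖x‖ / ‖x‖ * x j * U x j := by
    intro j
    refine integrable_of_annulus (b := b) ha ?_ fun x hx => by simp [hψ0 _ hx]
    refine ContinuousOn.mul (ContinuousOn.mul (ContinuousOn.div ?_ ?_ hpos) ?_)
      (hUj j).continuousOn
    · exact (hψ.comp continuous_norm).continuousOn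
    · exact continuous_norm.continuousOn
    · exact (PiLp.continuous_apply 2 _ j).continuousOn
  have hi2 : ∀ j, Integrable fun x : Euc m => φ ‖x‖ * pd j (fun y => U y j) x := by
    intro j
    refine integrable_of_annulus (b := b) ha ?_ fun x hx => by simp [hφ0 _ hx]
    refine ContinuousOn.mul (hφc.comp continuous_norm).continuousOn ?_
    exact ((hUj j).continuousOn_fderiv_of_isOpen hopen le_rfl).clm_apply continuousOn_const
  have hi3 : ∀ j, Integrable fun x : Euc m => φ ‖x‖ * U x j := by
    intro j
    refine integrable_of_annulus (b := b) ha ?_ fun x hx => by simp [hφ0 _ hx]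
    exact ContinuousOn.mul (hφc.comp continuous_norm).continuousOn (hUj j).continuousOn
  have hsupp : tsupport (fun y : Euc m => φ ‖y‖) ⊆ {x | r₀ < ‖x‖} := by
    refine (closure_minimal (t := {x : Euc m | ‖x‖ ∈ Set.Icc a b}) (fun x hx => ?_)
      (isCompact_annulus m a b).isClosed).trans fun x hx => ha.trans_le hx.1
    by_contra h
    exact hx (hφ0 _ h)
  have hparts : ∀ j, ∫ x : Euc m, φ ‖x‖ * pd j (fun y => U y j) x =
      -∫ x : Euc m, ψ ‖x‖ / ‖x‖ * x j * U x j := by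
    intro j
    have := integral_mul_fderiv_eq_neg_fderiv_mul_of_integrable (μ := (volume : Measure (Euc m)))
      (f := fun y : Euc m => φ ‖y‖) (g := fun y => U y j) (v := EuclideanSpace.single j 1)
      (by simpa only [hfd'] using hi1 j) (hi2 j) (hi3 j)
      (fun x _ => (hfd x).differentiableAt)
      (fun x hx => ((hUj j).contDiffAt (hopen.mem_nhds (hsupp hx))).differentiableAt one_ne_zero)
    simp only [hfd'] at this
    exact this
  have hsum : ∫ x : Euc m, ∑ j, ψ ‖x‖ / ‖x‖ * x j * U x j =
      -∫ x : Euc m, φ ‖x‖ * ∑ j, pd j (fun y => U y j) x := by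
    simp only [Finset.mul_sum]
    rw [integral_finsetSum _ fun j _ => hi1 j, integral_finsetSum _ fun j _ => hi2 j,
      ← Finset.sum_neg_distrib]
    exact Finset.sum_congr rfl fun j _ => by rw [hparts j, neg_neg]
  have hpolar : ∫ r in Set.Ioi (0 : ℝ), ψ r * fluxAux m r₀ U r =
      ∫ x : Euc m, ∑ j, ψ ‖x‖ / ‖x‖ * x j * U x j := by
    rw [integral_polar m (integrable_finsetSum _ fun j _ => hi1 j)]
    refine setIntegral_congr_fun measurableSet_Ioi fun r (hr : 0 < r) => ?_
    have hn : ∀ ω : Metric.sphere (0 : Euc m) 1, ‖r • (ω : Euc m)‖ = r := fun ω => by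
      simp [norm_smul, hr.le]
    simp only [hn, fluxAux]
    by_cases hrI : r ∈ Set.Icc a b
    · rw [max_eq_left (ha.le.trans hrI.1), mul_left_comm, ← integral_const_mul]
      congr 2
      ext ω
      rw [Finset.mul_sum]
      refine Finset.sum_congr rfl fun j _ => ?_
      simp only [PiLp.smul_apply, smul_eq_mul]
      field_simp
    · simp [hψ0 r hrI]
  have hA : ∫ x : Euc m, φ ‖x‖ * ∑ j, pd j (fun y => U y j) x =
      ∫ x in {x : Euc m | a ≤ ‖x‖}, φ ‖x‖ * ∑ j, pd j (fun y => U y j) x := by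
    refine (setIntegral_eq_integral_of_forall_compl_eq_zero fun x hx => ?_).symm
    rw [hφ0 _ fun h => hx h.1, zero_mul]
  rw [hpolar, hsum, abs_neg, hA, ← Real.norm_eq_abs]
  refine norm_integral_le_of_norm_le
    ((hdiv.mono_set fun x (hx : a ≤ ‖x‖) => ha.le.trans hx).abs) ?_
  filter_upwards with x
  rw [norm_mul, Real.norm_eq_abs, Real.norm_eq_abs]
  exact mul_le_of_le_one_left (abs_nonneg _) (hφ1 _)

/-! ### Smooth steps and the Cauchy estimate -/

/-- A `C¹` step `Φ` rising from `0` to `1` within distance `ε` of `a`; its derivative `ψ` is an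
approximate unit mass at `a`. -/
lemma exists_smooth_step (a : ℝ) {ε : ℝ} (hε : 0 < ε) :
    ∃ Φ ψ : ℝ → ℝ, (∀ s, HasDerivAt Φ (ψ s) s) ∧ Continuous ψ ∧ (∀ s, 0 ≤ ψ s) ∧
      (∀ s ∉ Set.Icc (a - ε) (a + ε), ψ s = 0) ∧ ∫ s, ψ s = 1 ∧
      (∀ s, Φ s ∈ Set.Icc (0 : ℝ) 1) ∧ (∀ s ≤ a - ε, Φ s = 0) ∧ (∀ s, a + ε ≤ s → Φ s = 1) := by
  let f : ContDiffBump a := ⟨ε / 2, ε, by positivity, by linarith⟩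
  set ψ : ℝ → ℝ := f.normed volume with hψ
  have hc : Continuous ψ := f.continuous_normed
  have hi : Integrable ψ := f.integrable_normed
  have h0 : ∀ s, 0 ≤ ψ s := f.nonneg_normed
  have h1 : ∫ s, ψ s = 1 := f.integral_normed
  have hs : ∀ s, ε ≤ |s - a| → ψ s = 0 := fun s h => by
    by_contra hne
    have : s ∈ Function.support (f.normed volume) := hne
    rw [f.support_normed_eq, Metric.mem_ball, Real.dist_eq] at this
    exact absurd this (not_lt.2 h)
  refine ⟨fun s => ∫ t in Set.Iic s, ψ t, ψ, fun s => ?_, hc, h0, fun s h => ?_, h1,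
    fun s => ⟨?_, ?_⟩, fun s h => ?_, fun s h => ?_⟩
  · have hd := (hc.integral_hasStrictDerivAt 0 s).hasDerivAt.const_add (∫ t in Set.Iic 0, ψ t)
    refine hd.congr_of_eventuallyEq (Eventually.of_forall fun u => ?_)
    have := intervalIntegral.integral_Iic_sub_Iic (hi.integrableOn (s := Set.Iic 0))
      (hi.integrableOn (s := Set.Iic u))
    simp only
    linarith
  · refine hs s ?_
    by_contra! hlt
    rw [abs_lt] at hlt
    exact h ⟨by linarith, by linarith⟩
  · exact integral_nonneg h0
  · exact (setIntegral_le_integral hi (Eventually.of_forall h0)).trans h1.le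
  · refine setIntegral_eq_zero_of_forall_eq_zero fun t (ht : t ≤ s) => hs t ?_
    rw [abs_of_nonpos (by linarith)]
    linarith
  · simp only
    rw [setIntegral_eq_integral_of_forall_compl_eq_zero, h1]
    intro t ht
    have : s < t := not_le.1 ht
    refine hs t ?_
    rw [abs_of_nonneg (by linarith)]
    linarith

/-- Testing `G` against a nonnegative kernel `ψ` of unit mass concentrated near `a` recovers `G a` up to
the oscillation of `G` there. The restriction to `(0, ∞)` is harmless because `ε < a`. -/
lemma abs_integral_mul_sub_le {a ε δ : ℝ} (hε : ε < a) {G ψ : ℝ → ℝ} (hG : Continuous G)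
    (hψ : Continuous ψ) (hψ0 : ∀ s, 0 ≤ ψ s) (hψs : ∀ s ∉ Set.Icc (a - ε) (a + ε), ψ s = 0)
    (hψ1 : ∫ s, ψ s = 1) (hδ : ∀ s ∈ Set.Icc (a - ε) (a + ε), |G s - G a| ≤ δ) :
    IntegrableOn (fun s => ψ s * G s) (Set.Ioi 0) ∧
      |(∫ s in Set.Ioi (0 : ℝ), ψ s * G s) - G a| ≤ δ := by
  have hcs : HasCompactSupport ψ := HasCompactSupport.intro isCompact_Icc hψs
  have hi : Integrable ψ := hψ.integrable_of_hasCompactSupport hcs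
  have hiG : Integrable (fun s => ψ s * G s) :=
    (hψ.mul hG).integrable_of_hasCompactSupport hcs.mul_right
  refine ⟨hiG.integrableOn, ?_⟩
  rw [setIntegral_eq_integral_of_forall_compl_eq_zero fun s hs => by
    rw [hψs s fun h => hs (Set.mem_Ioi.2 (by linarith [h.1])), zero_mul]]
  have : (∫ s, ψ s * G s) - G a = ∫ s, ψ s * (G s - G a) := by
    simp only [mul_sub]
    rw [integral_sub hiG (hi.mul_const _), integral_mul_const, hψ1, one_mul]
  rw [this, ← Real.norm_eq_abs]
  refine (norm_integral_le_of_norm_le (hi.mul_const δ) (Eventually.of_forall fun s => ?_)).trans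
    (by rw [integral_mul_const, hψ1, one_mul])
  rw [norm_mul, Real.norm_eq_abs, Real.norm_eq_abs, abs_of_nonneg (hψ0 s)]
  by_cases hs : s ∈ Set.Icc (a - ε) (a + ε)
  · exact mul_le_mul_of_nonneg_left (hδ s hs) (hψ0 s)
  · simp [hψs s hs]

/-- The fluxes through two spheres of radius larger than `R` differ by at most the integral of `|div U|`
over `‖x‖ ≥ R`. The cutoff is the difference of two smooth steps at `a` and `b`, whose derivative
approximates `δ_a - δ_b`; the order of `a` and `b` is irrelevant. -/
lemma abs_fluxAux_sub_le {m : ℕ} {r₀ : ℝ} (hr₀ : 0 < r₀)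
    {U : Euc m → Euc m} (hU : ContDiffOn ℝ 1 U {x | r₀ ≤ ‖x‖})
    (hdiv : IntegrableOn (fun x => ∑ j, pd j (fun y => U y j) x) {x | r₀ ≤ ‖x‖} volume)
    {R a b : ℝ} (hR : r₀ < R) (ha : R < a) (hb : R < b) :
    |fluxAux m r₀ U a - fluxAux m r₀ U b| ≤
      ∫ x in {x : Euc m | R ≤ ‖x‖}, |∑ j, pd j (fun y => U y j) x| := by
  set G := fluxAux m r₀ U with hG
  have hGc : Continuous G := continuous_fluxAux hr₀ hU
  refine le_of_forall_pos_le_add fun η hη => ?_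
  -- all small enough step widths keep the step outside radius `R` and `G` nearly constant on it
  have hloc : ∀ c, R < c → ∀ᶠ ε in nhdsWithin (0 : ℝ) (Set.Ioi 0),
      R ≤ c - ε ∧ ∀ s ∈ Set.Icc (c - ε) (c + ε), |G s - G c| ≤ η / 2 := by
    intro c hc
    obtain ⟨ε₀, hε₀, h⟩ := Metric.continuous_iff.1 hGc c (η / 2) (by positivity)
    filter_upwards [Ioo_mem_nhdsGT (lt_min hε₀ (sub_pos.2 hc))] with ε hε
    have h1 := lt_min_iff.1 hε.2
    refine ⟨by linarith [h1.2], fun s hs => (h s ?_).le⟩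
    rw [Real.dist_eq, abs_lt]
    constructor <;> linarith [hs.1, hs.2, h1.1]
  obtain ⟨ε, ⟨⟨haR, hGa⟩, hbR, hGb⟩, hε⟩ :=
    ((hloc a ha).and (hloc b hb)).and self_mem_nhdsWithin |>.exists
  replace hε : 0 < ε := hε
  obtain ⟨Φa, ψa, hda, hca, hna, hsa, hia, hΦa, hΦa0, hΦa1⟩ := exists_smooth_step a hε
  obtain ⟨Φb, ψb, hdb, hcb, hnb, hsb, hib, hΦb, hΦb0, hΦb1⟩ := exists_smooth_step b hε
  obtain ⟨hIa, hEa⟩ := abs_integral_mul_sub_le (by linarith) hGc hca hna hsa hia hGa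
  obtain ⟨hIb, hEb⟩ := abs_integral_mul_sub_le (by linarith) hGc hcb hnb hsb hib hGb
  set M := max (a + ε) (b + ε) with hM
  have hMa : a + ε ≤ M := le_max_left _ _
  have hMb : b + ε ≤ M := le_max_right _ _
  have hmain := abs_integral_mul_fluxAux_le (a := R) (b := M) hr₀ hR hU hdiv
    (φ := fun s => Φa s - Φb s) (ψ := fun s => ψa s - ψb s)
    (fun s => (hda s).sub (hdb s)) (hca.sub hcb)
    (fun s hs => by
      rcases lt_or_ge s R with h | h
      · rw [hΦa0 s (by linarith), hΦb0 s (by linarith), sub_zero]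
      · have : M < s := not_le.1 fun h' => hs ⟨h, h'⟩
        rw [hΦa1 s (by linarith), hΦb1 s (by linarith), sub_self])
    (fun s hs => by
      rw [hsa s fun h => hs ⟨by linarith [h.1], by linarith [h.2]⟩,
        hsb s fun h => hs ⟨by linarith [h.1], by linarith [h.2]⟩, sub_zero])
    (fun s => abs_le.2 ⟨by linarith [(hΦa s).1, (hΦb s).2], by linarith [(hΦa s).2, (hΦb s).1]⟩)
  simp only [sub_mul, ← hG] at hmain
  rw [integral_sub hIa hIb] at hmain
  rw [abs_le] at hEa hEb hmain ⊢
  constructor <;> linarith [hEa.1, hEa.2, hEb.1, hEb.2, hmain.1, hmain.2]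

lemma exists_tendsto_fluxAux {m : ℕ} {r₀ : ℝ} (hr₀ : 0 < r₀)
    {U : Euc m → Euc m} (hU : ContDiffOn ℝ 1 U {x | r₀ ≤ ‖x‖})
    (hdiv : IntegrableOn (fun x => ∑ j, pd j (fun y => U y j) x) {x | r₀ ≤ ‖x‖} volume) :
    ∃ L, Tendsto (fluxAux m r₀ U) atTop (nhds L) := by
  have htail : Tendsto
      (fun R : ℝ => ∫ x in {x : Euc m | R ≤ ‖x‖}, |∑ j, pd j (fun y => U y j) x|)
      atTop (nhds 0) := by
    have h := tendsto_setIntegral_of_antitone (μ := (volume : Measure (Euc m)))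
      (f := fun x => |∑ j, pd j (fun y => U y j) x|)
      (s := fun R : ℝ => {x : Euc m | R ≤ ‖x‖})
      (fun R => measurableSet_le measurable_const measurable_norm)
      (fun R R' h x (hx : R' ≤ ‖x‖) => h.trans hx) ⟨r₀, hdiv.abs⟩
    have hempty : (⋂ R : ℝ, {x : Euc m | R ≤ ‖x‖}) = ∅ := by
      refine Set.eq_empty_of_forall_notMem fun x hx => ?_
      have : ‖x‖ + 1 ≤ ‖x‖ := Set.mem_iInter.1 hx (‖x‖ + 1)
      linarith
    simpa [hempty] using h
  refine cauchySeq_tendsto_of_complete (Metric.cauchySeq_iff.2 fun η hη => ?_)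
  obtain ⟨R, hRη, hR⟩ := ((htail.eventually (gt_mem_nhds hη)).and (eventually_gt_atTop r₀)).exists
  refine ⟨R + 1, fun a ha b hb => ?_⟩
  rw [Real.dist_eq]
  have ha' : R + 1 ≤ a := ha
  have hb' : R + 1 ≤ b := hb
  exact (abs_fluxAux_sub_le hr₀ hU hdiv hR (by linarith) (by linarith)).trans_lt hRη

/-- for `n ≥ 2`, `r₀ > 0` and a `C¹` vector field `U` on `{|x| ≥ r₀}` whose
divergence is Lebesgue-integrable there, the flux integrals
`∫_{S_r} ⟨U(x), x/r⟩ dσ_r(x)` converge to a finite limit as `r → ∞`. -/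
theorem flux_integrals_converge_of_integrable_divergence
    (n : ℕ) (hn : 2 ≤ n) (r₀ : ℝ) (hr₀ : 0 < r₀)
    (U : EuclideanSpace ℝ (Fin n) → EuclideanSpace ℝ (Fin n))
    (hU : ContDiffOn ℝ 1 U {x : EuclideanSpace ℝ (Fin n) | r₀ ≤ ‖x‖})
    (hdiv : IntegrableOn (fun x => ∑ j, pd j (fun y => U y j) x)
      {x : EuclideanSpace ℝ (Fin n) | r₀ ≤ ‖x‖} volume) :
    ∃ L : ℝ, Tendsto
      (fun r : ℝ => ∫ x in Metric.sphere (0 : EuclideanSpace ℝ (Fin n)) r,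
        (∑ j, U x j * (x j / r)) ∂(μH[(n : ℝ) - 1]))
      atTop (nhds L) := by
  obtain ⟨m, rfl⟩ : ∃ m, n = m + 1 := ⟨n - 1, by omega⟩
  have hm : (((m + 1 : ℕ) : ℝ) - 1) = m := by push_cast; ring
  rw [hm]
  obtain ⟨c, hc⟩ := integral_hausdorff_sphere m
  obtain ⟨L, hL⟩ := exists_tendsto_fluxAux hr₀ hU hdiv
  refine ⟨c * L, (hL.const_mul c).congr' ?_⟩
  filter_upwards [eventually_ge_atTop r₀] with r hr
  have hr' : 0 < r := hr₀.trans_le hr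
  rw [integral_hausdorff_sphere_radius m hr', hc, fluxAux, max_eq_left hr, mul_left_comm]
  congr 3
  ext ω
  refine Finset.sum_congr rfl fun j _ => ?_
  simp only [PiLp.smul_apply, smul_eq_mul]
  rw [mul_div_cancel_left₀ _ hr'.ne']
end

section
/- Let n ≥ 1, τ > 0, C > 0, R > 0. Let e : ℝⁿ → ℝ^{n×n} be a C¹ symmetric matrix field and ζ : ℝⁿ → ℝⁿ a C¹ vector field such that for all |x| ≥ R: ‖e(x)‖ ≤ C|x|^{−τ}, ‖De(x)‖ ≤ C|x|^{−τ−1}, ‖ζ(x)‖ ≤ C|x|^{1−τ}, ‖ζ(x)‖ ≤ |x|/2, and ‖Dζ(x)‖ ≤ C|x|^{−τ}. Set g = δ + e, Ψ = id + ζ, and R₁ = Ψ*g − g − L_ζδ (pullback taken componentwise). Then there exists a constant C′ > 0 such that ‖R₁(x)‖ ≤ C′ |x|^{−2τ} for all |x| ≥ 2R. -/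
/-- The pullback of a matrix-valued field `e` by `Ψ = id + ζ`:
`(Ψ*e)_{ij}(x) = ∑_{a,b} e_{ab}(x + ζ(x)) (δ_{ai} + ∂_i ζ_a(x)) (δ_{bj} + ∂_j ζ_b(x))`. -/
noncomputable def pullback {n : ℕ}
    (ζ : EuclideanSpace ℝ (Fin n) → EuclideanSpace ℝ (Fin n))
    (e : EuclideanSpace ℝ (Fin n) → Fin n → Fin n → ℝ)
    (x : EuclideanSpace ℝ (Fin n)) (i j : Fin n) : ℝ :=
  ∑ a, ∑ b, e (x + ζ x) a b
    * ((if a = i then (1:ℝ) else 0) + pd i (fun y => ζ y a) x)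
    * ((if b = j then (1:ℝ) else 0) + pd j (fun y => ζ y b) x)

theorem pullback_expand {n : ℕ} (A E : Fin n → Fin n → ℝ) (c : ℝ) (i j : Fin n) :
    ∑ a, ∑ b, ((if a = b then (1:ℝ) else 0) + E a b)
        * ((if a = i then (1:ℝ) else 0) + A i a) * ((if b = j then (1:ℝ) else 0) + A j b)
      - ((if i = j then (1:ℝ) else 0) + c) - (A i j + A j i)
    = (E i j - c) + ∑ a, A i a * A j a + ∑ a, E a j * A i a + ∑ b, E i b * A j b
      + ∑ a, ∑ b, E a b * A i a * A j b := by
  simp only [add_mul, mul_add, Finset.sum_add_distrib, ite_mul, mul_ite, one_mul, zero_mul,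
    mul_one, mul_zero, Finset.sum_ite_eq, Finset.sum_ite_eq', Finset.mem_univ, if_true,
    Finset.sum_ite_irrel, Finset.sum_const_zero]
  ring

theorem pd_apply_le {n : ℕ} {ζ : EuclideanSpace ℝ (Fin n) → EuclideanSpace ℝ (Fin n)}
    {x : EuclideanSpace ℝ (Fin n)} (h : DifferentiableAt ℝ ζ x) (i a : Fin n) :
    |pd i (fun y => ζ y a) x| ≤ ‖fderiv ℝ ζ x‖ := by
  have h1 : HasFDerivAt (fun y => ζ y a)
      ((EuclideanSpace.proj a : EuclideanSpace ℝ (Fin n) →L[ℝ] ℝ).comp (fderiv ℝ ζ x)) x :=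
    (EuclideanSpace.proj a : EuclideanSpace ℝ (Fin n) →L[ℝ] ℝ).hasFDerivAt.comp x
      h.hasFDerivAt
  unfold pd
  rw [h1.fderiv]
  have h2 := PiLp.norm_apply_le (fderiv ℝ ζ x (EuclideanSpace.single i 1)) a
  have h3 := (fderiv ℝ ζ x).le_opNorm (EuclideanSpace.single i 1)
  simp only [PiLp.norm_single, norm_one, mul_one] at h3
  exact h2.trans h3

theorem norm_fderiv_le_of_pd {n : ℕ} {f : EuclideanSpace ℝ (Fin n) → ℝ}
    {x : EuclideanSpace ℝ (Fin n)} {B : ℝ} (hB : 0 ≤ B) (h : ∀ k, |pd k f x| ≤ B) :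
    ‖fderiv ℝ f x‖ ≤ n * B := by
  refine ContinuousLinearMap.opNorm_le_bound _ (by positivity) fun v => ?_
  have hv : v = ∑ k, v k • EuclideanSpace.single k (1:ℝ) := by
    ext l
    simp [Pi.single_apply]
  conv_lhs => rw [hv, map_sum]
  refine (norm_sum_le _ _).trans ?_
  have : ∀ k ∈ Finset.univ, ‖fderiv ℝ f x (v k • EuclideanSpace.single k (1:ℝ))‖ ≤ B * ‖v‖ := by
    intro k _
    rw [map_smul, norm_smul, mul_comm]
    exact mul_le_mul (h k) (PiLp.norm_apply_le v k) (norm_nonneg _) hB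
  refine (Finset.sum_le_sum this).trans ?_
  simp [mul_assoc]

theorem half_rpow_neg_le {r s p : ℝ} (hr : 0 < r) (hs : r / 2 ≤ s) (hp : 0 ≤ p) :
    s ^ (-p) ≤ 2 ^ p * r ^ (-p) := by
  calc s ^ (-p) ≤ (r / 2) ^ (-p) :=
        Real.rpow_le_rpow_of_nonpos (by positivity) hs (by linarith)
    _ = 2 ^ p * r ^ (-p) := by
        rw [Real.div_rpow hr.le (by norm_num), Real.rpow_neg (by norm_num : (0:ℝ) ≤ 2), div_inv_eq_mul,
          mul_comm]

/-- The mean value estimate `e(x + v) - e(x) = O(r^{-2τ})` for a displacement `v = O(r^{1-τ})`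
of length at most `‖x‖ / 2`. -/
theorem abs_sub_le_of_decay {n : ℕ} {τ C R : ℝ} (hτ : 0 < τ) (hC : 0 < C) (hR : 0 < R)
    {f : EuclideanSpace ℝ (Fin n) → ℝ} (hf : Differentiable ℝ f)
    (hb : ∀ x : EuclideanSpace ℝ (Fin n), R ≤ ‖x‖ → ∀ k, |pd k f x| ≤ C * ‖x‖ ^ (-τ - 1))
    {x v : EuclideanSpace ℝ (Fin n)} (hx : 2 * R ≤ ‖x‖) (hv : ‖v‖ ≤ C * ‖x‖ ^ (1 - τ))
    (hv2 : ‖v‖ ≤ ‖x‖ / 2) :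
    |f (x + v) - f x| ≤ (n * (C * 2 ^ (τ + 1)) * C) * ‖x‖ ^ (-(2 * τ)) := by
  have hx0 : 0 < ‖x‖ := by linarith
  have key : ∀ y ∈ Metric.closedBall x (‖x‖ / 2),
      ‖fderiv ℝ f y‖ ≤ n * (C * (2 ^ (τ + 1) * ‖x‖ ^ (-(τ + 1)))) := by
    intro y hy
    have hy' : ‖x‖ / 2 ≤ ‖y‖ := by
      rw [mem_closedBall_iff_norm] at hy
      have := norm_sub_norm_le x y
      rw [norm_sub_rev] at this
      linarith
    refine norm_fderiv_le_of_pd (by positivity) fun k => ?_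
    refine (hb y (by linarith) k).trans ?_
    rw [show -τ - 1 = -(τ + 1) by ring]
    exact mul_le_mul_of_nonneg_left (half_rpow_neg_le hx0 hy' (by linarith)) hC.le
  have hmv := (convex_closedBall x (‖x‖ / 2)).norm_image_sub_le_of_norm_fderiv_le
    (fun y _ => hf y) key (Metric.mem_closedBall_self (by positivity))
    (show x + v ∈ Metric.closedBall x (‖x‖ / 2) by simpa [mem_closedBall_iff_norm] using hv2)
  rw [add_sub_cancel_left, Real.norm_eq_abs] at hmv
  refine hmv.trans ((mul_le_mul_of_nonneg_left hv (by positivity)).trans (le_of_eq ?_))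
  rw [show -(2 * τ) = -(τ + 1) + (1 - τ) by ring, Real.rpow_add hx0]
  ring

/-- in the asymptotically flat setting, with `g = δ + e`, `Ψ = id + ζ`
and decay `e = O(r^{−τ})`, `De = O(r^{−τ−1})`, `ζ = O(r^{1−τ})`, `‖ζ‖ ≤ r/2`,
`Dζ = O(r^{−τ})`, the remainder `R₁ = Ψ*g − g − L_ζδ` satisfies
`‖R₁(x)‖ ≤ C′ |x|^{−2τ}` for `|x| ≥ 2R`. -/
theorem remainder_R1_decay
    (n : ℕ) (hn : 1 ≤ n) (τ C R : ℝ) (hτ : 0 < τ) (hC : 0 < C) (hR : 0 < R)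
    (e : EuclideanSpace ℝ (Fin n) → Fin n → Fin n → ℝ)
    (he : ∀ i j, ContDiff ℝ 1 (fun x => e x i j))
    (hesymm : ∀ x i j, e x i j = e x j i)
    (ζ : EuclideanSpace ℝ (Fin n) → EuclideanSpace ℝ (Fin n))
    (hζ : ContDiff ℝ 1 ζ)
    (hbe : ∀ x : EuclideanSpace ℝ (Fin n), R ≤ ‖x‖ →
      ∀ i j, |e x i j| ≤ C * ‖x‖ ^ (-τ))
    (hbDe : ∀ x : EuclideanSpace ℝ (Fin n), R ≤ ‖x‖ →
      ∀ i j k, |pd k (fun y => e y i j) x| ≤ C * ‖x‖ ^ (-τ - 1))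
    (hbζ : ∀ x : EuclideanSpace ℝ (Fin n), R ≤ ‖x‖ → ‖ζ x‖ ≤ C * ‖x‖ ^ (1 - τ))
    (hbζhalf : ∀ x : EuclideanSpace ℝ (Fin n), R ≤ ‖x‖ → ‖ζ x‖ ≤ ‖x‖ / 2)
    (hbDζ : ∀ x : EuclideanSpace ℝ (Fin n), R ≤ ‖x‖ → ‖fderiv ℝ ζ x‖ ≤ C * ‖x‖ ^ (-τ)) :
    ∃ C' : ℝ, 0 < C' ∧ ∀ x : EuclideanSpace ℝ (Fin n), 2 * R ≤ ‖x‖ → ∀ i j,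
      |pullback ζ (fun y a b => (if a = b then (1:ℝ) else 0) + e y a b) x i j
        - ((if i = j then (1:ℝ) else 0) + e x i j) - lieFlat ζ x i j|
      ≤ C' * ‖x‖ ^ (-(2 * τ)) := by
  -- The terms are those of `pullback_expand`; the last one bounds the cubic term via
  -- `r ^ (-τ) ≤ (2R) ^ (-τ)`.
  refine ⟨n * (C * 2 ^ (τ + 1)) * C + n * (C * C) + n * (C * 2 ^ τ * C) + n * (C * 2 ^ τ * C)
    + n * (n * (C * 2 ^ τ * C * C * (2 * R) ^ (-τ))), ?_, ?_⟩
  · have hn' : (0:ℝ) < n := by exact_mod_cast hn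
    positivity
  intro x hx i j
  have hx0 : 0 < ‖x‖ := by linarith
  have hxR : R ≤ ‖x‖ := by linarith
  have hfar : ‖x‖ / 2 ≤ ‖x + ζ x‖ := by
    have h1 := hbζhalf x hxR
    have h2 := norm_sub_le_norm_add x (ζ x)
    linarith
  have hA : ∀ i a, |pd i (fun y => ζ y a) x| ≤ C * ‖x‖ ^ (-τ) := fun i a =>
    (pd_apply_le (hζ.differentiable one_ne_zero x) i a).trans (hbDζ x hxR)
  have hE : ∀ a b, |e (x + ζ x) a b| ≤ C * 2 ^ τ * ‖x‖ ^ (-τ) := fun a b => by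
    refine (hbe _ (by linarith) a b).trans ?_
    rw [mul_assoc]
    exact mul_le_mul_of_nonneg_left (half_rpow_neg_le hx0 hfar hτ.le) hC.le
  have hD := abs_sub_le_of_decay hτ hC hR ((he i j).differentiable one_ne_zero)
    (fun y hy k => hbDe y hy i j k) hx (hbζ x hxR) (hbζhalf x hxR)
  have ht : ‖x‖ ^ (-τ) ≤ (2 * R) ^ (-τ) :=
    Real.rpow_le_rpow_of_nonpos (by positivity) hx (by linarith)
  have ht2 : ‖x‖ ^ (-(2 * τ)) = ‖x‖ ^ (-τ) * ‖x‖ ^ (-τ) := by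
    rw [← Real.rpow_add hx0]
    ring_nf
  have ht0 : 0 < ‖x‖ ^ (-τ) := by positivity
  unfold pullback lieFlat
  have hexp := pullback_expand (fun i a => pd i (fun y => ζ y a) x) (e (x + ζ x)) (e x i j) i j
  beta_reduce at hexp
  rw [hexp]
  rw [ht2] at hD ⊢
  generalize ‖x‖ ^ (-τ) = t at *
  generalize (fun i a => pd i (fun y => ζ y a) x) = A at *
  have hsum : ∀ (F : Fin n → ℝ) (B : ℝ), (∀ a, |F a| ≤ B) → |∑ a, F a| ≤ n * B := by
    intro F B h
    refine (Finset.abs_sum_le_sum_abs _ _).trans ((Finset.sum_le_sum fun a _ => h a).trans ?_)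
    simp
  have hmul : ∀ {p q P Q : ℝ}, |p| ≤ P → |q| ≤ Q → |p * q| ≤ P * Q := by
    intro p q P Q hp hq
    rw [abs_mul]
    exact mul_le_mul hp hq (abs_nonneg _) ((abs_nonneg _).trans hp)
  have h1 := hsum _ _ fun a => hmul (hA i a) (hA j a)
  have h2 := hsum _ _ fun a => hmul (hE a j) (hA i a)
  have h3 := hsum _ _ fun b => hmul (hE i b) (hA j b)
  have h4 := hsum _ _ fun a => hsum _ _ fun b => hmul (hmul (hE a b) (hA i a)) (hA j b)
  have h5 : (n:ℝ) * (n * (C * 2 ^ τ * t * (C * t) * (C * t)))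
      ≤ n * (n * (C * 2 ^ τ * C * C * (2 * R) ^ (-τ))) * (t * t) := by
    calc (n:ℝ) * (n * (C * 2 ^ τ * t * (C * t) * (C * t)))
        = (n * (n * (C * 2 ^ τ * C * C)) * (t * t)) * t := by ring
      _ ≤ (n * (n * (C * 2 ^ τ * C * C)) * (t * t)) * (2 * R) ^ (-τ) :=
          mul_le_mul_of_nonneg_left ht (by positivity)
      _ = _ := by ring
  refine (abs_add_le _ _).trans ((add_le_add ((abs_add_le _ _).trans (add_le_add
    ((abs_add_le _ _).trans (add_le_add ((abs_add_le _ _).trans (add_le_add hD h1)) h2)) h3))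
    (h4.trans h5)).trans (le_of_eq ?_))
  ring
end
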